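/- arXiv:2202.12942 — 3 statements merged into one kernel-verified Lean document; each statement's English description precedes it below -/
import Mathlib

section
/- Parseval's relation for the QPFT: for all f, g ∈ L¹(ℝ) ∩ L²(ℝ), ∫_ℝ Q_μ[f](ξ) · conj(Q_μ[g](ξ)) dξ = ∫_ℝ f(t) · conj(g(t)) dt. -/
open MeasureTheory Complex

/-- The constant √(b/(2πi)) = √(b/(2π))·e^{−iπ/4}. -/
noncomputable def qpConst (b : ℝ) : ℂ :=
  (Real.sqrt (b / (2 * Real.pi)) : ℂ) * Complex.exp (-((Real.pi / 4 : ℝ) : ℂ) * Complex.I)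

/-- The dilation ψ_α(t) = α^{−1/2} ψ(t/α). -/
noncomputable def dil (ψ : ℝ → ℂ) (α : ℝ) (t : ℝ) : ℂ :=
  ((α ^ (-(1 / 2 : ℝ)) : ℝ) : ℂ) * ψ (t / α)

/-- The quadratic-phase Fourier transform. -/
noncomputable def QPFT (a b c d e : ℝ) (f : ℝ → ℂ) (ξ : ℝ) : ℂ :=
  qpConst b * ∫ t : ℝ, f t *
    Complex.exp (Complex.I * ((a * t ^ 2 + b * t * ξ + c * ξ ^ 2 + d * t + e * ξ : ℝ) : ℂ))

/-- The quadratic-phase wave packet transform of `f` with respect to the wavelet `ψ`. -/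
noncomputable def QPWPT (a b c d e : ℝ) (ψ f : ℝ → ℂ) (ξ β α : ℝ) : ℂ :=
  qpConst b * ∫ t : ℝ,
    Complex.exp (Complex.I * ((2 * a * t ^ 2 + b * t * ξ + c * ξ ^ 2 + 2 * d * t + e * ξ
      - a * β ^ 2 - d * β : ℝ) : ℂ)) * f t * (starRingEnd ℂ) (dil ψ α (t - β))

/-- The analyzing packet ψ^μ_{ξ,β,α}. -/
noncomputable def qpwPacket (a b c d e : ℝ) (ψ : ℝ → ℂ) (ξ β α : ℝ) (t : ℝ) : ℂ :=
  (starRingEnd ℂ) (qpConst b) *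
    Complex.exp (-Complex.I * ((2 * a * t ^ 2 + b * t * ξ + c * ξ ^ 2 + 2 * d * t + e * ξ
      - a * β ^ 2 - d * β : ℝ) : ℂ)) * dil ψ α (t - β)

/-!
The kernel `e^{i(at² + btξ + cξ² + dt + eξ)}` splits into a chirp in `ξ`, a chirp in `t`
and the Fourier kernel at the frequency `-(b / 2π) ξ`. Chirps are unimodular, so they disappear from
sesquilinear pairings, and the Jacobian of `ξ ↦ -(b / 2π) ξ` cancels `|√(b / (2πi))|² = b / 2π`.
What is left is Plancherel's theorem for the ordinary Fourier transform on `L¹ ∩ L²`, where the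
Fourier integral agrees with the `L²` Fourier transform because both satisfy
`∫ 𝓕 φ • f = ∫ φ • 𝓕 f` for all Schwartz functions `φ`.
-/

open scoped FourierTransform SchwartzMap InnerProductSpace

section Plancherel

variable {E F : Type*} [NormedAddCommGroup E] [MeasurableSpace E] [BorelSpace E]
  [NormedAddCommGroup F]

open scoped ContDiff in
lemma ae_eq_of_forall_integral_schwartzMap_smul_eq [NormedSpace ℝ E] [FiniteDimensional ℝ E]
    [NormedSpace ℂ F] [CompleteSpace F] {μ : Measure E} {f g : E → F}
    (hf : LocallyIntegrable f μ) (hg : LocallyIntegrable g μ)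
    (h : ∀ φ : 𝓢(E, ℂ), ∫ x, φ x • f x ∂μ = ∫ x, φ x • g x ∂μ) : f =ᵐ[μ] g := by
  refine ae_eq_of_integral_contDiff_smul_eq hf hg fun φ hφ hφc ↦ ?_
  have hsupp : HasCompactSupport (ofRealCLM ∘ φ) := hφc.comp_left rfl
  have hsmooth : ContDiff ℝ ∞ (ofRealCLM ∘ φ) := by fun_prop
  simpa using h (hsupp.toSchwartzMap hsmooth)

variable [InnerProductSpace ℝ E] [FiniteDimensional ℝ E]

lemma integral_fourier_smul_eq_of_integrable [NormedSpace ℂ F] [CompleteSpace F]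
    {φ : E → ℂ} {f : E → F} (hφ : Integrable φ) (hf : Integrable f) :
    ∫ ξ, 𝓕 φ ξ • f ξ = ∫ x, φ x • 𝓕 f x := by
  simpa using! VectorFourier.integral_fourierIntegral_smul_eq_flip (L := innerₗ E)
    Real.continuous_fourierChar continuous_inner hφ hf

lemma continuous_fourier_of_integrable [NormedSpace ℂ F] {f : E → F} (hf : Integrable f) :
    Continuous (𝓕 f) :=
  VectorFourier.fourierIntegral_continuous Real.continuous_fourierChar
    (innerSL ℝ).continuous₂ hf

variable [InnerProductSpace ℂ F] [CompleteSpace F]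

lemma coeFn_fourier_toLp_ae_eq {f : E → F} (hf₁ : Integrable f) (hf₂ : MemLp f 2) :
    ⇑(𝓕 (hf₂.toLp f) : Lp F 2 (volume : Measure E)) =ᵐ[volume] 𝓕 f := by
  refine ae_eq_of_forall_integral_schwartzMap_smul_eq
    ((Lp.memLp _).locallyIntegrable one_le_two)
    (continuous_fourier_of_integrable hf₁).locallyIntegrable fun φ ↦ ?_
  calc ∫ ξ, φ ξ • 𝓕 (hf₂.toLp f) ξ
      = ∫ x, 𝓕 φ x • hf₂.toLp f x := by
        simpa using
          (DFunLike.congr_fun (Lp.fourier_toTemperedDistribution_eq (hf₂.toLp f)) φ).symm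
    _ = ∫ x, 𝓕 φ x • f x :=
        integral_congr_ae (hf₂.coeFn_toLp.mono fun x hx ↦ by simp only [hx])
    _ = ∫ ξ, φ ξ • 𝓕 f ξ := integral_fourier_smul_eq_of_integrable φ.integrable hf₁

theorem integral_inner_fourier_fourier_of_memLp {f g : E → F} (hf₁ : Integrable f)
    (hf₂ : MemLp f 2) (hg₁ : Integrable g) (hg₂ : MemLp g 2) :
    ∫ ξ, ⟪𝓕 f ξ, 𝓕 g ξ⟫_ℂ = ∫ x, ⟪f x, g x⟫_ℂ := by
  calc ∫ ξ, ⟪𝓕 f ξ, 𝓕 g ξ⟫_ℂ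
      = ⟪𝓕 (hf₂.toLp f), 𝓕 (hg₂.toLp g)⟫_ℂ := by
        rw [L2.inner_def]
        refine integral_congr_ae ?_
        filter_upwards [coeFn_fourier_toLp_ae_eq hf₁ hf₂, coeFn_fourier_toLp_ae_eq hg₁ hg₂]
          with ξ hfξ hgξ
        rw [hfξ, hgξ]
    _ = ⟪hf₂.toLp f, hg₂.toLp g⟫_ℂ := Lp.inner_fourier_eq _ _
    _ = ∫ x, ⟪f x, g x⟫_ℂ := by
        rw [L2.inner_def]
        refine integral_congr_ae ?_
        filter_upwards [hf₂.coeFn_toLp, hg₂.coeFn_toLp] with x hfx hgx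
        rw [hfx, hgx]

end Plancherel

lemma inner_smul_smul_self {𝕜 E : Type*} [RCLike 𝕜] [SeminormedAddCommGroup E]
    [InnerProductSpace 𝕜 E] (r : 𝕜) (x y : E) :
    ⟪r • x, r • y⟫_𝕜 = (‖r‖ ^ 2 : ℝ) * ⟪x, y⟫_𝕜 := by
  rw [inner_smul_left, inner_smul_right, ← mul_assoc, RCLike.conj_mul, RCLike.ofReal_pow]

lemma inner_circle_smul_smul {E : Type*} [SeminormedAddCommGroup E] [InnerProductSpace ℂ E]
    (z : Circle) (x y : E) : ⟪z • x, z • y⟫_ℂ = ⟪x, y⟫_ℂ := by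
  simp [Circle.smul_def, Circle.norm_coe, inner_smul_smul_self]

lemma memLp_circle_smul {α E : Type*} [MeasurableSpace α] {μ : Measure α} [NormedAddCommGroup E]
    [NormedSpace ℂ E] {p : ENNReal} {u : α → Circle} {f : α → E}
    (hu : AEStronglyMeasurable u μ) (hf : MemLp f p μ) : MemLp (fun x ↦ u x • f x) p μ :=
  hf.congr_norm (hu.fun_smul hf.1) (.of_forall fun _ ↦ (Circle.norm_smul _ _).symm)

lemma integral_abs_smul_comp_mul_left {E : Type*} [NormedAddCommGroup E] [NormedSpace ℝ E]
    {k : ℝ} (hk : k ≠ 0) (h : ℝ → E) : ∫ x, |k| • h (k * x) = ∫ y, h y := by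
  rw [integral_smul, Measure.integral_comp_mul_left, smul_smul, ← abs_mul, mul_inv_cancel₀ hk,
    abs_one, one_smul]

/-- The linear chirp `t ↦ e^{i(at² + dt)}`, the unimodular factor by which the quadratic-phase
kernel differs from the Fourier kernel, in each of the two variables. -/
noncomputable def chirp (a d t : ℝ) : Circle := Circle.exp (a * t ^ 2 + d * t)

lemma continuous_chirp (a d : ℝ) : Continuous (chirp a d) := by
  unfold chirp
  fun_prop

lemma norm_qpConst_sq {b : ℝ} (hb : 0 ≤ b) : ‖qpConst b‖ ^ 2 = b / (2 * Real.pi) := by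
  rw [qpConst, norm_mul, ← ofReal_neg, norm_exp_ofReal_mul_I, mul_one, norm_real,
    Real.norm_eq_abs, sq_abs, Real.sq_sqrt (by positivity)]

lemma exp_quadraticPhase_eq (a b c d e t ξ : ℝ) :
    exp (I * ((a * t ^ 2 + b * t * ξ + c * ξ ^ 2 + d * t + e * ξ : ℝ) : ℂ)) =
      chirp c e ξ * exp (↑(-2 * Real.pi * t * (-(b / (2 * Real.pi)) * ξ)) * I) * chirp a d t := by
  have hfreq : -2 * Real.pi * t * (-(b / (2 * Real.pi)) * ξ) = b * t * ξ := by field_simp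
  rw [hfreq, chirp, chirp, Circle.coe_exp, Circle.coe_exp, ← exp_add, ← exp_add]
  congr 1
  push_cast
  ring

lemma QPFT_eq_smul_fourier (a b c d e : ℝ) (f : ℝ → ℂ) (ξ : ℝ) :
    QPFT a b c d e f ξ =
      qpConst b • chirp c e ξ • 𝓕 (fun t ↦ chirp a d t • f t) (-(b / (2 * Real.pi)) * ξ) := by
  rw [Real.fourier_real_eq_integral_exp_smul, Circle.smul_def, ← integral_smul, smul_eq_mul, QPFT]
  congr 2 with t
  rw [exp_quadraticPhase_eq]
  simp only [Circle.smul_def, smul_eq_mul]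
  ring

lemma inner_QPFT_QPFT (a c d e : ℝ) {b : ℝ} (hb : 0 ≤ b) (f g : ℝ → ℂ) (ξ : ℝ) :
    ⟪QPFT a b c d e f ξ, QPFT a b c d e g ξ⟫_ℂ = (b / (2 * Real.pi)) •
      ⟪𝓕 (fun t ↦ chirp a d t • f t) (-(b / (2 * Real.pi)) * ξ),
        𝓕 (fun t ↦ chirp a d t • g t) (-(b / (2 * Real.pi)) * ξ)⟫_ℂ := by
  rw [QPFT_eq_smul_fourier, QPFT_eq_smul_fourier, inner_smul_smul_self, inner_circle_smul_smul,
    norm_qpConst_sq hb, real_smul]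
  rfl

lemma integral_inner_QPFT_QPFT (a c d e : ℝ) {b : ℝ} (hb : 0 < b) (f g : ℝ → ℂ) :
    ∫ ξ, ⟪QPFT a b c d e f ξ, QPFT a b c d e g ξ⟫_ℂ =
      ∫ η, ⟪𝓕 (fun t ↦ chirp a d t • f t) η, 𝓕 (fun t ↦ chirp a d t • g t) η⟫_ℂ := by
  have hk : 0 < b / (2 * Real.pi) := by positivity
  simp only [inner_QPFT_QPFT a c d e hb.le]
  simpa only [abs_neg, abs_of_pos hk] using
    integral_abs_smul_comp_mul_left (neg_ne_zero.mpr hk.ne') fun η ↦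
      ⟪𝓕 (fun t ↦ chirp a d t • f t) η, 𝓕 (fun t ↦ chirp a d t • g t) η⟫_ℂ

theorem qpft_parseval (a b c d e : ℝ) (hb : 0 < b) (f g : ℝ → ℂ)
    (hf1 : Integrable f volume) (hf2 : MemLp f 2 volume)
    (hg1 : Integrable g volume) (hg2 : MemLp g 2 volume) :
    ∫ ξ : ℝ, QPFT a b c d e f ξ * (starRingEnd ℂ) (QPFT a b c d e g ξ)
      = ∫ t : ℝ, f t * (starRingEnd ℂ) (g t) := by
  have memLp_chirp {p : ENNReal} {h : ℝ → ℂ} (hh : MemLp h p) :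
      MemLp (fun t ↦ chirp a d t • h t) p :=
    memLp_circle_smul (continuous_chirp a d).aestronglyMeasurable hh
  rw [← memLp_one_iff_integrable] at hf1 hg1
  -- `⟪z, w⟫_ℂ` unfolds to `w * conj z`, so `f` and `g` trade places.
  calc ∫ ξ, ⟪QPFT a b c d e g ξ, QPFT a b c d e f ξ⟫_ℂ
      = ∫ η, ⟪𝓕 (fun t ↦ chirp a d t • g t) η, 𝓕 (fun t ↦ chirp a d t • f t) η⟫_ℂ :=
        integral_inner_QPFT_QPFT a c d e hb g f
    _ = ∫ t, ⟪chirp a d t • g t, chirp a d t • f t⟫_ℂ :=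
        integral_inner_fourier_fourier_of_memLp
          (memLp_one_iff_integrable.mp (memLp_chirp hg1)) (memLp_chirp hg2)
          (memLp_one_iff_integrable.mp (memLp_chirp hf1)) (memLp_chirp hf2)
    _ = ∫ t, ⟪g t, f t⟫_ℂ := by simp only [inner_circle_smul_smul]
end

section
/- Expression of the QP-WPT in the quadratic-phase frequency domain: let f, ψ ∈ L¹(ℝ) ∩ L²(ℝ), α > 0 and ξ, β ∈ ℝ. Then W^μ_f(ξ, β, α) = √α · √(b/(2πi)) ∫_ℝ e^{−i(aβ² + bβw + cw² + dβ + ew)} · e^{i(cα²w² + eαw − 2cwξ)} · Q_μ[t ↦ e^{i(at² + dt)} f(t)](w + ξ) · conj(Q_μ[t ↦ e^{−i(at² + dt)} ψ(t)](αw)) dw. -/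
open MeasureTheory Complex

/-
A quadratic-phase Fourier transform is a Fourier transform conjugated by chirps, hence unitary up to
the normalisation `|qpConst b|² = b / (2π)`. Writing the QP-WPT as the inner product of the chirped
signal with the equally chirped packet, the extra chirp turns the factor `e^{-i(2at² + 2dt)}` of the
packet into the `e^{-i(at² + dt)}` which the QPFT cancels. What remains is the ordinary Fourier
transform of a modulated, translated and dilated wavelet: the modulation shifts the frequency by
`ξ`, the translation contributes `e^{ibβw}` and the dilation contributes `√α` and the argument `αw`.
-/

open scoped FourierTransform ComplexInnerProductSpace ComplexConjugate ENNReal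

theorem memLp_comp_inv_smul {V E : Type*} [NormedAddCommGroup V] [NormedSpace ℝ V]
    [FiniteDimensional ℝ V] [MeasurableSpace V] [BorelSpace V] {μ : Measure V}
    [μ.IsAddHaarMeasure] [NormedAddCommGroup E] {p : ℝ≥0∞} {f : V → E} (hf : MemLp f p μ)
    {r : ℝ} (hr : r ≠ 0) : MemLp (fun v ↦ f (r⁻¹ • v)) p μ := by
  refine MemLp.comp_of_map ?_ (measurable_const_smul r⁻¹).aemeasurable
  rw [Measure.map_addHaar_smul μ (inv_ne_zero hr)]
  exact hf.smul_measure ENNReal.ofReal_ne_top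

section Fourier

variable {V E : Type*} [NormedAddCommGroup V] [InnerProductSpace ℝ V] [FiniteDimensional ℝ V]
  [MeasurableSpace V] [BorelSpace V] [NormedAddCommGroup E] [NormedSpace ℂ E]

theorem fourier_const_smul (z : ℂ) (f : V → E) (w : V) :
    𝓕 (fun v ↦ z • f v) w = z • 𝓕 f w :=
  congrFun (VectorFourier.fourierIntegral_const_smul 𝐞 volume (innerₗ V) f z) w

theorem fourier_comp_sub_right (f : V → E) (v w : V) :
    𝓕 (fun u ↦ f (u - v)) w = 𝐞 (-inner ℝ v w) • 𝓕 f w := by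
  have h := congrFun
    (VectorFourier.fourierIntegral_comp_add_right 𝐞 volume (innerₗ V) f (-v)) w
  simpa only [Function.comp_def, ← sub_eq_add_neg, map_neg, LinearMap.neg_apply,
    innerₗ_apply_apply] using! h

theorem fourier_fourierChar_smul (f : V → E) (v w : V) :
    𝓕 (fun u ↦ 𝐞 (inner ℝ u v) • f u) w = 𝓕 f (w - v) := by
  simp only [Real.fourier_eq]
  congr 1 with u
  rw [smul_smul, ← AddChar.map_add_eq_mul, inner_sub_right]
  congr 2
  ring

theorem fourier_comp_inv_smul (f : V → E) {r : ℝ} (hr : r ≠ 0) (w : V) :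
    𝓕 (fun v ↦ f (r⁻¹ • v)) w = |r ^ Module.finrank ℝ V| • 𝓕 f (r • w) := by
  simp only [Real.fourier_eq]
  rw [← Measure.integral_comp_inv_smul]
  congr 1 with v
  rw [inner_smul_left, inner_smul_right, conj_trivial, inv_mul_cancel_left₀ hr]

theorem continuous_fourier {f : V → E} (hf : Integrable f) : Continuous (𝓕 f) :=
  VectorFourier.fourierIntegral_continuous Real.continuous_fourierChar
    (innerSL ℝ).continuous₂ hf

theorem integral_fourier_smul_eq [CompleteSpace E] {φ : V → ℂ} {f : V → E}
    (hφ : Integrable φ) (hf : Integrable f) :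
    ∫ w, 𝓕 φ w • f w = ∫ v, φ v • 𝓕 f v := by
  have h := VectorFourier.integral_fourierIntegral_smul_eq_flip (L := innerₗ V)
    Real.continuous_fourierChar continuous_inner hφ hf
  rwa [flip_innerₗ] at h

end Fourier

section Plancherel

variable {V E : Type*} [NormedAddCommGroup V] [InnerProductSpace ℝ V] [FiniteDimensional ℝ V]
  [MeasurableSpace V] [BorelSpace V] [NormedAddCommGroup E] [InnerProductSpace ℂ E]
  [CompleteSpace E]

open SchwartzMap in
theorem fourier_toLp_ae_eq {f : V → E} (hf₁ : Integrable f) (hf₂ : MemLp f 2) :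
    (𝓕 (hf₂.toLp f) : Lp E 2 (volume : Measure V)) =ᵐ[volume] 𝓕 f := by
  refine ae_eq_of_integral_contDiff_smul_eq ((Lp.memLp _).locallyIntegrable one_le_two)
    (continuous_fourier hf₁).locallyIntegrable fun φ hφ hφc ↦ ?_
  have hΦc : HasCompactSupport (ofRealCLM ∘ φ) := hφc.comp_left rfl
  let Φ : 𝓢(V, ℂ) := hΦc.toSchwartzMap (ofRealCLM.contDiff.comp hφ)
  have tempered := congrArg (fun T : 𝓢'(V, E) ↦ T Φ)
    (Lp.fourier_toTemperedDistribution_eq (hf₂.toLp f))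
  simp only [TemperedDistribution.fourier_apply, Lp.toTemperedDistribution_apply] at tempered
  calc ∫ v, φ v • (𝓕 (hf₂.toLp f) : Lp E 2 (volume : Measure V)) v
      = ∫ v, Φ v • (𝓕 (hf₂.toLp f) : Lp E 2 (volume : Measure V)) v := by simp [Φ]
    _ = ∫ w, (𝓕 Φ) w • hf₂.toLp f w := tempered.symm
    _ = ∫ w, (𝓕 Φ) w • f w :=
      integral_congr_ae (hf₂.coeFn_toLp.mono fun w hw ↦ by simp only [hw])
    _ = ∫ v, Φ v • 𝓕 f v := by
      rw [fourier_coe]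
      exact integral_fourier_smul_eq Φ.integrable hf₁
    _ = ∫ v, φ v • 𝓕 f v := by simp [Φ]

theorem integral_inner_fourier_fourier {f g : V → E} (hf₁ : Integrable f) (hf₂ : MemLp f 2)
    (hg₁ : Integrable g) (hg₂ : MemLp g 2) :
    ∫ w, ⟪𝓕 f w, 𝓕 g w⟫ = ∫ v, ⟪f v, g v⟫ := by
  have plancherel := Lp.inner_fourier_eq (hf₂.toLp f) (hg₂.toLp g)
  rw [L2.inner_def, L2.inner_def] at plancherel
  calc ∫ w, ⟪𝓕 f w, 𝓕 g w⟫
      = ∫ w, ⟪(𝓕 (hf₂.toLp f) : Lp E 2 (volume : Measure V)) w,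
          (𝓕 (hg₂.toLp g) : Lp E 2 (volume : Measure V)) w⟫ := by
        refine integral_congr_ae ?_
        filter_upwards [fourier_toLp_ae_eq hf₁ hf₂, fourier_toLp_ae_eq hg₁ hg₂] with w hf hg
        rw [hf, hg]
    _ = ∫ v, ⟪hf₂.toLp f v, hg₂.toLp g v⟫ := plancherel
    _ = ∫ v, ⟪f v, g v⟫ := by
        refine integral_congr_ae ?_
        filter_upwards [hf₂.coeFn_toLp, hg₂.coeFn_toLp] with v hf hg
        rw [hf, hg]

end Plancherel

section Unimodular

theorem memLp_cexp_I_mul {X : Type*} [MeasurableSpace X] {μ : Measure X} {p : ℝ≥0∞} {φ : X → ℝ}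
    (hφ : AEMeasurable φ μ) {f : X → ℂ} (hf : MemLp f p μ) :
    MemLp (fun x ↦ cexp (I * φ x) * f x) p μ := by
  have phase : AEStronglyMeasurable (fun x ↦ cexp (I * φ x)) μ :=
    AEMeasurable.aestronglyMeasurable (by fun_prop)
  refine hf.congr_norm (phase.mul hf.aestronglyMeasurable) (ae_of_all μ fun x ↦ ?_)
  rw [norm_mul, norm_exp_I_mul_ofReal, one_mul]

theorem conj_cexp_I_mul (x : ℝ) : conj (cexp (I * x)) = cexp (-I * x) := by
  rw [← exp_conj, map_mul, conj_I, conj_ofReal]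

theorem cexp_I_mul_mul_conj (x : ℝ) : cexp (I * x) * conj (cexp (I * x)) = 1 := by
  rw [conj_cexp_I_mul, ← exp_add, neg_mul, add_neg_cancel, exp_zero]

theorem coe_fourierChar_div_two_pi (x : ℝ) : (𝐞 (x / (2 * Real.pi)) : ℂ) = cexp (I * x) := by
  rw [Real.fourierChar_apply, mul_div_cancel₀ _ Real.two_pi_pos.ne', mul_comm]

end Unimodular

section Dilation

variable {ψ : ℝ → ℂ} {α : ℝ}

theorem dil_eq_smul (ψ : ℝ → ℂ) (α : ℝ) :
    dil ψ α = fun t ↦ ((α ^ (-(1 / 2 : ℝ)) : ℝ) : ℂ) • ψ (α⁻¹ • t) := by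
  ext t
  rw [dil, div_eq_inv_mul t α, smul_eq_mul, smul_eq_mul]

theorem memLp_dil {p : ℝ≥0∞} (hψ : MemLp ψ p) (hα : α ≠ 0) : MemLp (dil ψ α) p := by
  rw [dil_eq_smul]
  exact (memLp_comp_inv_smul hψ hα).const_smul ((α ^ (-(1 / 2 : ℝ)) : ℝ) : ℂ)

theorem fourier_dil (ψ : ℝ → ℂ) (hα : 0 < α) (w : ℝ) :
    𝓕 (dil ψ α) w = Real.sqrt α * 𝓕 ψ (α * w) := by
  have normalisation : α ^ (-(1 / 2 : ℝ)) * α = Real.sqrt α := by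
    rw [Real.sqrt_eq_rpow, ← Real.rpow_add_one hα.ne']
    norm_num
  rw [dil_eq_smul, fourier_const_smul, fourier_comp_inv_smul ψ hα.ne', Module.finrank_self, pow_one,
    abs_of_pos hα, smul_eq_mul, smul_eq_mul, real_smul, ← mul_assoc, ← ofReal_mul, normalisation]

end Dilation

section QuadraticPhase

variable {b : ℝ}

theorem qpConst_mul_conj (hb : 0 ≤ b) : qpConst b * conj (qpConst b) = (b / (2 * Real.pi) : ℝ) := by
  have phase : cexp (-((Real.pi / 4 : ℝ) : ℂ) * I) = cexp (I * (-(Real.pi / 4) : ℝ)) := by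
    rw [ofReal_neg, mul_comm]
  rw [qpConst, phase, map_mul, conj_ofReal, mul_mul_mul_comm, cexp_I_mul_mul_conj, mul_one,
    ← ofReal_mul, Real.mul_self_sqrt (by positivity)]

theorem QPFT_eq_fourier (a b c d e : ℝ) (f : ℝ → ℂ) (ξ : ℝ) :
    QPFT a b c d e f ξ = qpConst b * cexp (I * (c * ξ ^ 2 + e * ξ : ℝ)) *
      𝓕 (fun t ↦ cexp (I * (a * t ^ 2 + d * t : ℝ)) * f t) (-(b / (2 * Real.pi)) * ξ) := by
  rw [QPFT, Real.fourier_real_eq, mul_assoc, ← integral_const_mul (cexp _)]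
  congr 2 with t
  have split_phase :
      cexp (I * (a * t ^ 2 + b * t * ξ + c * ξ ^ 2 + d * t + e * ξ : ℝ)) =
        cexp (I * (c * ξ ^ 2 + e * ξ : ℝ)) * cexp (I * (b * t * ξ : ℝ)) *
          cexp (I * (a * t ^ 2 + d * t : ℝ)) := by
    simp only [← exp_add]
    congr 1
    push_cast
    ring
  have kernel : (𝐞 (-(t * (-(b / (2 * Real.pi)) * ξ))) : ℂ) = cexp (I * (b * t * ξ : ℝ)) := by
    rw [← coe_fourierChar_div_two_pi]
    congr 2
    ring
  rw [Circle.smul_def, smul_eq_mul, kernel, split_phase]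
  ring

theorem QPFT_const_mul (a b c d e : ℝ) (k : ℂ) (f : ℝ → ℂ) (ξ : ℝ) :
    QPFT a b c d e (fun t ↦ k * f t) ξ = k * QPFT a b c d e f ξ := by
  rw [QPFT, QPFT, mul_left_comm, ← integral_const_mul k]
  simp only [mul_assoc]

theorem QPFT_cexp_neg_mul (a b c d e : ℝ) (g : ℝ → ℂ) (ξ : ℝ) :
    QPFT a b c d e (fun t ↦ cexp (-I * (a * t ^ 2 + d * t : ℝ)) * g t) ξ =
      qpConst b * cexp (I * (c * ξ ^ 2 + e * ξ : ℝ)) * 𝓕 g (-(b / (2 * Real.pi)) * ξ) := by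
  simp only [QPFT_eq_fourier, ← mul_assoc, ← conj_cexp_I_mul, cexp_I_mul_mul_conj, one_mul]

theorem integral_QPFT_mul_conj_QPFT (a c d e : ℝ) (hb : 0 < b) {f g : ℝ → ℂ}
    (hf₁ : Integrable f) (hf₂ : MemLp f 2) (hg₁ : Integrable g) (hg₂ : MemLp g 2) :
    ∫ w, QPFT a b c d e f w * conj (QPFT a b c d e g w) = ∫ t, f t * conj (g t) := by
  let chirped (h : ℝ → ℂ) (t : ℝ) : ℂ := cexp (I * (a * t ^ 2 + d * t : ℝ)) * h t
  have memLp_chirped {p : ℝ≥0∞} {h : ℝ → ℂ} (hh : MemLp h p) : MemLp (chirped h) p :=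
    memLp_cexp_I_mul (by fun_prop) hh
  have integrable_chirped {h : ℝ → ℂ} (hh : Integrable h) : Integrable (chirped h) :=
    memLp_one_iff_integrable.1 (memLp_chirped (memLp_one_iff_integrable.2 hh))
  have scale_pos : 0 < b / (2 * Real.pi) := by positivity
  have pointwise (w : ℝ) : QPFT a b c d e f w * conj (QPFT a b c d e g w) =
      (b / (2 * Real.pi) : ℝ) * ⟪𝓕 (chirped g) (-(b / (2 * Real.pi)) * w),
        𝓕 (chirped f) (-(b / (2 * Real.pi)) * w)⟫ := by
    rw [QPFT_eq_fourier, QPFT_eq_fourier, ← qpConst_mul_conj hb.le, RCLike.inner_apply, map_mul,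
      map_mul]
    linear_combination qpConst b * conj (qpConst b) * 𝓕 (chirped f) (-(b / (2 * Real.pi)) * w) *
      conj (𝓕 (chirped g) (-(b / (2 * Real.pi)) * w)) * cexp_I_mul_mul_conj (c * w ^ 2 + e * w)
  calc ∫ w, QPFT a b c d e f w * conj (QPFT a b c d e g w)
      = (b / (2 * Real.pi) : ℝ) * ∫ w, ⟪𝓕 (chirped g) (-(b / (2 * Real.pi)) * w),
          𝓕 (chirped f) (-(b / (2 * Real.pi)) * w)⟫ := by
        simp only [pointwise, integral_const_mul]
    _ = ∫ w, ⟪𝓕 (chirped g) w, 𝓕 (chirped f) w⟫ := by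
        rw [Measure.integral_comp_mul_left (fun w ↦ ⟪𝓕 (chirped g) w, 𝓕 (chirped f) w⟫), abs_inv,
          abs_neg, abs_of_pos scale_pos, real_smul, ← mul_assoc, ← ofReal_mul,
          mul_inv_cancel₀ scale_pos.ne', ofReal_one, one_mul]
    _ = ∫ t, ⟪chirped g t, chirped f t⟫ :=
        integral_inner_fourier_fourier (integrable_chirped hg₁) (memLp_chirped hg₂)
          (integrable_chirped hf₁) (memLp_chirped hf₂)
    _ = ∫ t, f t * conj (g t) := by
        congr 1 with t
        rw [RCLike.inner_apply, map_mul, mul_mul_mul_comm, cexp_I_mul_mul_conj, one_mul]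

theorem memLp_qpwPacket (a b c d e : ℝ) {p : ℝ≥0∞} {ψ : ℝ → ℂ} (hψ : MemLp ψ p) (ξ β : ℝ)
    {α : ℝ} (hα : α ≠ 0) : MemLp (qpwPacket a b c d e ψ ξ β α) p := by
  have translated : MemLp (fun t ↦ dil ψ α (t - β)) p :=
    (memLp_dil hψ hα).comp_measurePreserving (measurePreserving_sub_right volume β)
  have modulated := memLp_cexp_I_mul (φ := fun t ↦ -(2 * a * t ^ 2 + b * t * ξ + c * ξ ^ 2 +
    2 * d * t + e * ξ - a * β ^ 2 - d * β)) (by fun_prop) translated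
  refine (modulated.const_mul (conj (qpConst b))).ae_eq (ae_of_all _ fun t ↦ ?_)
  simp only [qpwPacket, ofReal_neg, mul_neg, neg_mul, mul_assoc]

theorem QPWPT_eq_integral_mul_conj_qpwPacket (a b c d e : ℝ) (ψ f : ℝ → ℂ) (ξ β α : ℝ) :
    QPWPT a b c d e ψ f ξ β α = ∫ t, f t * conj (qpwPacket a b c d e ψ ξ β α t) := by
  rw [QPWPT, ← integral_const_mul]
  congr 1 with t
  rw [qpwPacket, ← conj_cexp_I_mul, map_mul, map_mul, conj_conj, conj_conj]
  ring

theorem fourier_modulated_translated_dil (b : ℝ) (ψ : ℝ → ℂ) {α : ℝ} (hα : 0 < α) (ξ β w : ℝ) :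
    𝓕 (fun t ↦ cexp (-I * (b * t * ξ : ℝ)) * dil ψ α (t - β)) (-(b / (2 * Real.pi)) * (w + ξ)) =
      Real.sqrt α * cexp (I * (b * β * w : ℝ)) * 𝓕 ψ (-(b / (2 * Real.pi)) * (α * w)) := by
  have modulation (t : ℝ) : cexp (-I * (b * t * ξ : ℝ)) * dil ψ α (t - β) =
      𝐞 (inner ℝ t (-(b / (2 * Real.pi)) * ξ)) • dil ψ α (t - β) := by
    rw [Circle.smul_def, smul_eq_mul, neg_mul, ← mul_neg, ← ofReal_neg,
      ← coe_fourierChar_div_two_pi, RCLike.inner_apply, conj_trivial]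
    congr 3
    ring
  have translation : (𝐞 (-inner ℝ β (-(b / (2 * Real.pi)) * w)) : ℂ) =
      cexp (I * (b * β * w : ℝ)) := by
    rw [← coe_fourierChar_div_two_pi, RCLike.inner_apply, conj_trivial]
    congr 2
    ring
  simp only [modulation]
  rw [fourier_fourierChar_smul, ← mul_sub, add_sub_cancel_right,
    fourier_comp_sub_right, fourier_dil ψ hα, Circle.smul_def, smul_eq_mul, translation,
    mul_left_comm α]
  ring

theorem cexp_mul_qpwPacket (a b c d e : ℝ) (ψ : ℝ → ℂ) (ξ β α t : ℝ) :
    cexp (I * (a * t ^ 2 + d * t : ℝ)) * qpwPacket a b c d e ψ ξ β α t =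
      conj (qpConst b) * cexp (-I * (c * ξ ^ 2 + e * ξ - a * β ^ 2 - d * β : ℝ)) *
        (cexp (-I * (a * t ^ 2 + d * t : ℝ)) *
          (cexp (-I * (b * t * ξ : ℝ)) * dil ψ α (t - β))) := by
  have split_phase : cexp (I * (a * t ^ 2 + d * t : ℝ)) *
      cexp (-I * (2 * a * t ^ 2 + b * t * ξ + c * ξ ^ 2 + 2 * d * t + e * ξ
        - a * β ^ 2 - d * β : ℝ)) =
      cexp (-I * (c * ξ ^ 2 + e * ξ - a * β ^ 2 - d * β : ℝ)) *
        cexp (-I * (a * t ^ 2 + d * t : ℝ)) * cexp (-I * (b * t * ξ : ℝ)) := by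
    simp only [← exp_add]
    congr 1
    push_cast
    ring
  rw [qpwPacket]
  linear_combination conj (qpConst b) * dil ψ α (t - β) * split_phase

theorem QPFT_cexp_mul_qpwPacket (a b c d e : ℝ) (ψ : ℝ → ℂ) {α : ℝ} (hα : 0 < α) (ξ β w : ℝ) :
    QPFT a b c d e
        (fun t ↦ cexp (I * (a * t ^ 2 + d * t : ℝ)) * qpwPacket a b c d e ψ ξ β α t) (w + ξ) =
      Real.sqrt α * conj (qpConst b) *
        cexp (I * (a * β ^ 2 + b * β * w + c * w ^ 2 + d * β + e * w : ℝ)) *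
        cexp (-I * (c * α ^ 2 * w ^ 2 + e * α * w - 2 * c * w * ξ : ℝ)) *
        QPFT a b c d e (fun t ↦ cexp (-I * (a * t ^ 2 + d * t : ℝ)) * ψ t) (α * w) := by
  have collect_phases : cexp (-I * (c * ξ ^ 2 + e * ξ - a * β ^ 2 - d * β : ℝ)) *
      cexp (I * (c * (w + ξ) ^ 2 + e * (w + ξ) : ℝ)) * cexp (I * (b * β * w : ℝ)) =
      cexp (I * (a * β ^ 2 + b * β * w + c * w ^ 2 + d * β + e * w : ℝ)) *
        cexp (-I * (c * α ^ 2 * w ^ 2 + e * α * w - 2 * c * w * ξ : ℝ)) *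
        cexp (I * (c * (α * w) ^ 2 + e * (α * w) : ℝ)) := by
    simp only [← exp_add]
    congr 1
    push_cast
    ring
  simp only [cexp_mul_qpwPacket]
  rw [QPFT_const_mul, QPFT_cexp_neg_mul, fourier_modulated_translated_dil b ψ hα,
    QPFT_cexp_neg_mul]
  linear_combination conj (qpConst b) * qpConst b * Real.sqrt α *
    𝓕 ψ (-(b / (2 * Real.pi)) * (α * w)) * collect_phases

end QuadraticPhase

theorem qpwpt_frequency_domain (a b c d e : ℝ) (hb : 0 < b) (f ψ : ℝ → ℂ)
    (hf1 : Integrable f volume) (hf2 : MemLp f 2 volume)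
    (hψ1 : Integrable ψ volume) (hψ2 : MemLp ψ 2 volume)
    (α : ℝ) (hα : 0 < α) (ξ β : ℝ) :
    QPWPT a b c d e ψ f ξ β α
      = (Real.sqrt α : ℂ) * qpConst b * ∫ w : ℝ,
          Complex.exp (-Complex.I * ((a * β ^ 2 + b * β * w + c * w ^ 2 + d * β + e * w : ℝ) : ℂ)) *
          Complex.exp (Complex.I * ((c * α ^ 2 * w ^ 2 + e * α * w - 2 * c * w * ξ : ℝ) : ℂ)) *
          QPFT a b c d e
            (fun t => Complex.exp (Complex.I * ((a * t ^ 2 + d * t : ℝ) : ℂ)) * f t) (w + ξ) *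
          (starRingEnd ℂ) (QPFT a b c d e
            (fun t => Complex.exp (-Complex.I * ((a * t ^ 2 + d * t : ℝ) : ℂ)) * ψ t) (α * w)) := by
  let F (t : ℝ) : ℂ := cexp (I * (a * t ^ 2 + d * t : ℝ)) * f t
  let Ψ (t : ℝ) : ℂ := cexp (I * (a * t ^ 2 + d * t : ℝ)) * qpwPacket a b c d e ψ ξ β α t
  have memLp_F {p : ℝ≥0∞} (hf : MemLp f p) : MemLp F p := memLp_cexp_I_mul (by fun_prop) hf
  have memLp_Ψ {p : ℝ≥0∞} (hψ : MemLp ψ p) : MemLp Ψ p :=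
    memLp_cexp_I_mul (by fun_prop) (memLp_qpwPacket a b c d e hψ ξ β hα.ne')
  rw [← memLp_one_iff_integrable] at hf1 hψ1
  calc QPWPT a b c d e ψ f ξ β α
      = ∫ t, F t * conj (Ψ t) := by
        rw [QPWPT_eq_integral_mul_conj_qpwPacket]
        congr 1 with t
        rw [map_mul, mul_mul_mul_comm, cexp_I_mul_mul_conj, one_mul]
    _ = ∫ w, QPFT a b c d e F w * conj (QPFT a b c d e Ψ w) :=
        (integral_QPFT_mul_conj_QPFT a c d e hb (memLp_one_iff_integrable.1 (memLp_F hf1))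
          (memLp_F hf2) (memLp_one_iff_integrable.1 (memLp_Ψ hψ1)) (memLp_Ψ hψ2)).symm
    _ = ∫ w, QPFT a b c d e F (w + ξ) * conj (QPFT a b c d e Ψ (w + ξ)) :=
        (integral_add_right_eq_self _ ξ).symm
    _ = _ := by
        rw [← integral_const_mul]
        congr 1 with w
        simp only [Ψ, QPFT_cexp_mul_qpwPacket a b c d e ψ hα, map_mul, conj_conj, conj_ofReal,
          ← conj_cexp_I_mul]
        ring
end

section
/- Let p, q ∈ (1, ∞) with 1/p + 1/q = 1, let ψ ∈ L^p(ℝ) and f ∈ L^q(ℝ). Then for all ξ, β ∈ ℝ and α > 0, |W^μ_f(ξ, β, α)| ≤ α^{1/p − 1/2} · √(b/(2π)) · ‖ψ‖_{L^p(ℝ)} ‖f‖_{L^q(ℝ)}. -/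
open MeasureTheory Complex

/-! The phase of the transform is unimodular, so Hölder's inequality applied to `f` and the
translated dilate `t ↦ ψ_α(t - β)` bounds the integral. Translation does not change the `L^p` norm,
and the dilation contributes `α ^ (-1/2)` from its normalisation and `α ^ (1/p)` from the change of
variables. -/

open scoped ENNReal

lemma eLpNorm_comp_smul {E F : Type*} [NormedAddCommGroup E] [NormedSpace ℝ E]
    [FiniteDimensional ℝ E] [MeasurableSpace E] [BorelSpace E] [NormedAddCommGroup F]
    (μ : Measure E) [μ.IsAddHaarMeasure] (f : E → F) (p : ℝ≥0∞) {r : ℝ} (hr : r ≠ 0) :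
    eLpNorm (fun x ↦ f (r • x)) p μ =
      ENNReal.ofReal |(r ^ Module.finrank ℝ E)⁻¹| ^ (1 / p).toReal * eLpNorm f p μ := by
  have hscale : ENNReal.ofReal |(r ^ Module.finrank ℝ E)⁻¹| ≠ 0 := by
    positivity
  calc eLpNorm (fun x ↦ f (r • x)) p μ
      = eLpNorm f p (μ.map (r • ·)) :=
        (measurableEmbedding_const_smul₀ hr).eLpNorm_map_measure.symm
    _ = _ := by
        rw [Measure.map_addHaar_smul μ hr, eLpNorm_smul_measure_of_ne_zero hscale, smul_eq_mul]

lemma enorm_integral_le_eLpNorm_mul_eLpNorm {X E F G : Type*} [MeasurableSpace X] {μ : Measure X}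
    [NormedAddCommGroup E] [NormedAddCommGroup F] [NormedAddCommGroup G] [NormedSpace ℝ G]
    {p q : ℝ≥0∞} [p.HolderConjugate q] {f : X → E} {g : X → F} {h : X → G}
    (hf : AEStronglyMeasurable f μ) (hg : AEStronglyMeasurable g μ)
    (hle : ∀ᵐ x ∂μ, ‖h x‖ ≤ ‖f x‖ * ‖g x‖) :
    ‖∫ x, h x ∂μ‖ₑ ≤ eLpNorm f p μ * eLpNorm g q μ :=
  calc ‖∫ x, h x ∂μ‖ₑ
      ≤ ∫⁻ x, ‖h x‖ₑ ∂μ := enorm_integral_le_lintegral_enorm h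
    _ = eLpNorm h 1 μ := eLpNorm_one_eq_lintegral_enorm.symm
    _ ≤ eLpNorm (fun x ↦ ‖f x‖ * ‖g x‖) 1 μ := eLpNorm_mono_ae_real hle
    _ ≤ eLpNorm f p μ * eLpNorm g q μ := by
        simpa using eLpNorm_le_eLpNorm_mul_eLpNorm'_of_norm (r := 1) hf hg
          (fun y z ↦ ‖y‖ * ‖z‖) 1 (by simp)

lemma norm_qpConst (b : ℝ) : ‖qpConst b‖ = Real.sqrt (b / (2 * Real.pi)) := by
  rw [qpConst, norm_mul, ← ofReal_neg, norm_exp_ofReal_mul_I, mul_one, norm_real,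
    Real.norm_of_nonneg (Real.sqrt_nonneg _)]

lemma dil_eq_smul_comp_smul (ψ : ℝ → ℂ) (α : ℝ) :
    dil ψ α = ((α ^ (-(1 / 2 : ℝ)) : ℝ) : ℂ) • fun t ↦ ψ (α⁻¹ • t) := by
  ext t
  simp [dil, div_eq_inv_mul]

lemma aestronglyMeasurable_dil {ψ : ℝ → ℂ} (hψ : AEStronglyMeasurable ψ volume) {α : ℝ}
    (hα : α ≠ 0) : AEStronglyMeasurable (dil ψ α) volume := by
  rw [dil_eq_smul_comp_smul]
  exact (hψ.comp_quasiMeasurePreserving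
    (Measure.quasiMeasurePreserving_smul volume (inv_ne_zero hα))).const_smul _

lemma eLpNorm_dil (ψ : ℝ → ℂ) (p : ℝ≥0∞) {α : ℝ} (hα : 0 < α) :
    eLpNorm (dil ψ α) p volume =
      ENNReal.ofReal (α ^ ((1 / p).toReal - 1 / 2)) * eLpNorm ψ p volume := by
  have hnorm : ‖((α ^ (-(1 / 2 : ℝ)) : ℝ) : ℂ)‖ₑ = ENNReal.ofReal (α ^ (-(1 / 2 : ℝ))) := by
    rw [← ofReal_norm, norm_real, Real.norm_of_nonneg (by positivity)]
  have hjac : |(α⁻¹ ^ Module.finrank ℝ ℝ)⁻¹| = α := by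
    simp [abs_of_pos hα]
  rw [dil_eq_smul_comp_smul, eLpNorm_const_smul, eLpNorm_comp_smul _ _ _ (inv_ne_zero hα.ne'),
    hnorm, hjac, ENNReal.ofReal_rpow_of_pos hα, ← mul_assoc,
    ← ENNReal.ofReal_mul (by positivity), ← Real.rpow_add hα, neg_add_eq_sub]

lemma enorm_qpwpt_le (a b c d e : ℝ) {p q : ℝ≥0∞} [p.HolderConjugate q] {ψ f : ℝ → ℂ}
    (hψ : AEStronglyMeasurable ψ volume) (hf : AEStronglyMeasurable f volume)
    (ξ β : ℝ) {α : ℝ} (hα : 0 < α) :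
    ‖QPWPT a b c d e ψ f ξ β α‖ₑ ≤
      ‖qpConst b‖ₑ * (ENNReal.ofReal (α ^ ((1 / p).toReal - 1 / 2)) * eLpNorm ψ p volume *
        eLpNorm f q volume) := by
  have hdil := aestronglyMeasurable_dil hψ hα.ne'
  have htranslate := measurePreserving_sub_right (volume : Measure ℝ) β
  rw [QPWPT, enorm_mul, ← eLpNorm_dil ψ p hα, ← eLpNorm_comp_measurePreserving hdil htranslate]
  gcongr
  refine enorm_integral_le_eLpNorm_mul_eLpNorm (hdil.comp_measurePreserving htranslate) hf
    (.of_forall fun t ↦ le_of_eq ?_)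
  rw [norm_mul, norm_mul, norm_exp_I_mul_ofReal, one_mul, RCLike.norm_conj, mul_comm,
    Function.comp_apply]

theorem qpwpt_pointwise_bound_general (a b c d e : ℝ) (_hb : 0 < b) (p q : ℝ≥0∞)
    [p.HolderConjugate q] (ψ f : ℝ → ℂ) (hψ : MemLp ψ p volume) (hf : MemLp f q volume)
    (ξ β α : ℝ) (hα : 0 < α) :
    ‖QPWPT a b c d e ψ f ξ β α‖
      ≤ α ^ ((1 / p).toReal - 1 / 2) * Real.sqrt (b / (2 * Real.pi)) *
        (eLpNorm ψ p volume).toReal * (eLpNorm f q volume).toReal := by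
  have hfinite : ‖qpConst b‖ₑ * (ENNReal.ofReal (α ^ ((1 / p).toReal - 1 / 2)) *
      eLpNorm ψ p volume * eLpNorm f q volume) ≠ ∞ := by
    have := hψ.eLpNorm_ne_top
    have := hf.eLpNorm_ne_top
    finiteness
  have hbound := ENNReal.toReal_mono hfinite
    (enorm_qpwpt_le a b c d e hψ.aestronglyMeasurable hf.aestronglyMeasurable ξ β hα)
  simp only [ENNReal.toReal_mul, toReal_enorm, norm_qpConst,
    ENNReal.toReal_ofReal (Real.rpow_nonneg hα.le _)] at hbound
  exact hbound.trans_eq (by ring)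

theorem qpwpt_pointwise_bound (a b c d e : ℝ) (hb : 0 < b) (p q : ℝ)
    (hp : 1 < p) (hq : 1 < q) (hpq : 1 / p + 1 / q = 1) (ψ f : ℝ → ℂ)
    (hψ : MemLp ψ (ENNReal.ofReal p) volume) (hf : MemLp f (ENNReal.ofReal q) volume)
    (ξ β α : ℝ) (hα : 0 < α) :
    ‖QPWPT a b c d e ψ f ξ β α‖
      ≤ α ^ (1 / p - 1 / 2) * Real.sqrt (b / (2 * Real.pi)) *
        (eLpNorm ψ (ENNReal.ofReal p) volume).toReal *
        (eLpNorm f (ENNReal.ofReal q) volume).toReal := by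
  have hconj : p.HolderConjugate q := Real.holderConjugate_iff.2 ⟨hp, by simpa using hpq⟩
  have := hconj.ennrealOfReal
  simpa [ENNReal.toReal_ofReal hconj.nonneg] using
    qpwpt_pointwise_bound_general a b c d e hb _ _ ψ f hψ hf ξ β α hα
end
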